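/- Let x ∈ CGA₊ satisfy x + x̃ ∈ ℝ, x·x̃ ∈ ℝ, and x·(e₃₊+e₃₋) = (e₃₊+e₃₋)·x. Then x lies in the real span of {1, e₁₊+e₁₋, e₂₊+e₂₋, e₃₊+e₃₋} or x lies in the real span of {1, e₁₂, e₁₊+e₁₋, e₂₊+e₂₋}. -/

import Mathlib

open Polynomial

/-- The quadratic form of signature (4,1) on ℝ⁵ defining conformal geometric algebra. -/
noncomputable def Qcga : QuadraticForm ℝ (Fin 5 → ℝ) :=
  QuadraticMap.weightedSumSquares ℝ (fun i : Fin 5 => if (i : ℕ) = 4 then (-1 : ℝ) else 1)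

/-- Conformal geometric algebra CGA = Cl(4,1). -/
abbrev CGA := CliffordAlgebra Qcga

/-- The generators e₁, e₂, e₃, e₊, e₋ of CGA (indexed 0,…,4). -/
noncomputable def eCGA (i : Fin 5) : CGA := CliffordAlgebra.ι Qcga (Pi.single i 1)

/-!
Write `n = e₊ + e₋`, a null vector, so that `eᵢ₊ + eᵢ₋ = eᵢ n`, and let `B = x - x̃`.

Reversion multiplies a product of `k` distinct orthogonal vectors by `(-1) ^ (k choose 2)`. In
dimension at most `5` an even element only involves `k = 0, 2, 4`, so `B` is a bivector. As
`x + x̃` is real, `x = (x + x̃) / 2 + B / 2`, hence `B` commutes with `e₃ n`, and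
`B ^ 2 = (x + x̃) ^ 2 - 4 x x̃` is real.

The commutator with a bivector maps vectors to vectors and is skew for the quadratic form. Since `B`
commutes with `e₃ n`, this forces `[B, n] = 0` and `[B, e₃] = c n` for a scalar `c`, which leaves
`B` in the span of `e₁₂, e₁ n, e₂ n, e₃ n`, with `e₃ n`-coefficient `-c / 2`. Finally
`0 = [B ^ 2, e₃] = 2 c B n`: either `c = 0` and the `e₃ n` term vanishes, or `B n = 0` and the
`e₁₂` term vanishes.
-/

open CliffordAlgebra QuadraticMap
open scoped Matrix

section Bivectors

variable {R M : Type*} [CommRing R] [AddCommGroup M] [Module R M]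

/-- The bivectors of a Clifford algebra, encoded as the span of the commutators of vectors: these
agree with the products of orthogonal vectors up to a factor `2`, but need no choice of basis. -/
def bivectors (Q : QuadraticForm R M) : Submodule R (CliffordAlgebra Q) :=
  Submodule.span R {w | ∃ u v, ⁅ι Q u, ι Q v⁆ = w}

variable {Q : QuadraticForm R M}

theorem lie_ι_mul_ι (u v w : M) :
    ⁅ι Q u * ι Q v, ι Q w⁆ = polar Q v w • ι Q u - polar Q u w • ι Q v := by
  have huw : ι Q w * ι Q u = algebraMap R _ (polar Q u w) - ι Q u * ι Q w := by
    rw [ι_mul_ι_comm, polar_comm]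
  rw [Ring.lie_def, mul_assoc, ι_mul_ι_comm v w, ← mul_assoc (ι Q w), huw, mul_sub, sub_mul,
    ← Algebra.commutes, ← Algebra.smul_def, ← Algebra.smul_def]
  noncomm_ring

theorem lie_ι_mem_range_of_mem_bivectors {B : CliffordAlgebra Q} (hB : B ∈ bivectors Q) (w : M) :
    ⁅B, ι Q w⁆ ∈ LinearMap.range (ι Q) := by
  simp only [Ring.lie_def]
  induction hB using Submodule.span_induction with
  | mem B hB =>
    obtain ⟨u, v, rfl⟩ := hB
    have h (a b : M) : ι Q a * ι Q b * ι Q w - ι Q w * (ι Q a * ι Q b) =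
        ι Q (polar Q b w • a - polar Q a w • b) := by
      rw [map_sub, map_smul, map_smul, ← lie_ι_mul_ι, Ring.lie_def]
    rw [Ring.lie_def, sub_mul, mul_sub, sub_sub_sub_comm, h, h, ← map_sub]
    exact LinearMap.mem_range_self _ _
  | zero => simp only [zero_mul, mul_zero, sub_zero, zero_mem]
  | add B C _ _ hB hC => simpa only [add_mul, mul_add, add_sub_add_comm] using add_mem hB hC
  | smul r B _ hB =>
    simpa only [smul_mul_assoc, mul_smul_comm, smul_sub] using Submodule.smul_mem _ r hB

theorem lie_ι_mul_add_mul_lie_ι (B : CliffordAlgebra Q) (v : M) :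
    ⁅B, ι Q v⁆ * ι Q v + ι Q v * ⁅B, ι Q v⁆ = 0 := calc
  ⁅B, ι Q v⁆ * ι Q v + ι Q v * ⁅B, ι Q v⁆ = B * (ι Q v * ι Q v) - ι Q v * ι Q v * B := by
    rw [Ring.lie_def]; noncomm_ring
  _ = 0 := by rw [ι_sq_scalar, Algebra.commutes, sub_self]

theorem ι_eq_sum_repr {J : Type*} [Fintype J] (e : Module.Basis J R M) (u : M) :
    ι Q u = ∑ i, e.repr u i • ι Q (e i) := by
  conv_lhs => rw [← e.sum_repr u, map_sum]
  simp only [map_smul]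

theorem exists_skew_of_mem_bivectors {J : Type*} [Fintype J] (e : Module.Basis J R M)
    {B : CliffordAlgebra Q} (hB : B ∈ bivectors Q) :
    ∃ b : Matrix J J R, bᵀ = -b ∧ B = ∑ i, ∑ j, b i j • (ι Q (e i) * ι Q (e j)) := by
  induction hB using Submodule.span_induction with
  | mem B hB =>
    obtain ⟨u, v, rfl⟩ := hB
    have ι_mul_ι (u v : M) : ι Q u * ι Q v =
        ∑ i, ∑ j, (e.repr u i * e.repr v j) • (ι Q (e i) * ι Q (e j)) := by
      simp only [ι_eq_sum_repr e u, ι_eq_sum_repr e v, Finset.sum_mul_sum, smul_mul_smul_comm]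
    refine ⟨Matrix.of fun i j => e.repr u i * e.repr v j - e.repr v i * e.repr u j, ?_, ?_⟩
    · ext i j
      simp only [Matrix.transpose_apply, Matrix.neg_apply, Matrix.of_apply]
      ring
    · simp only [Ring.lie_def, ι_mul_ι u v, ι_mul_ι v u, Matrix.of_apply, sub_smul,
        Finset.sum_sub_distrib]
  | zero => exact ⟨0, by simp⟩
  | add B C _ _ hB hC =>
    obtain ⟨b, hb, rfl⟩ := hB
    obtain ⟨c, hc, rfl⟩ := hC
    refine ⟨b + c, by rw [Matrix.transpose_add, hb, hc, neg_add], ?_⟩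
    simp only [Matrix.add_apply, add_smul, Finset.sum_add_distrib]
  | smul r B _ hB =>
    obtain ⟨b, hb, rfl⟩ := hB
    refine ⟨r • b, by rw [Matrix.transpose_smul, hb, smul_neg], ?_⟩
    simp only [Matrix.smul_apply, smul_assoc, Finset.smul_sum]

theorem lie_sum_ι_mul_ι_of_skew {J : Type*} [Fintype J] (f : J → M) {b : Matrix J J R}
    (hb : bᵀ = -b) (w : M) :
    ⁅∑ i, ∑ j, b i j • (ι Q (f i) * ι Q (f j)), ι Q w⁆ =
      ι Q (∑ i, (2 * ∑ j, b i j * polar Q (f j) w) • f i) := by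
  have skew (i j : J) : b j i = -b i j := congrFun (congrFun hb i) j
  have swap : ∑ i, ∑ j, (b i j * polar Q (f i) w) • ι Q (f j) =
      -∑ i, ∑ j, (b i j * polar Q (f j) w) • ι Q (f i) := by
    rw [Finset.sum_comm, ← Finset.sum_neg_distrib]
    refine Finset.sum_congr rfl fun i _ => ?_
    rw [← Finset.sum_neg_distrib]
    exact Finset.sum_congr rfl fun j _ => by rw [skew i j, neg_mul, neg_smul]
  calc
    _ = ∑ i, ∑ j, b i j • ⁅ι Q (f i) * ι Q (f j), ι Q w⁆ := by
      simp only [Ring.lie_def, Finset.sum_mul, Finset.mul_sum, smul_mul_assoc, mul_smul_comm,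
        smul_sub, Finset.sum_sub_distrib]
    _ = ∑ i, ∑ j, (b i j * polar Q (f j) w) • ι Q (f i) -
        ∑ i, ∑ j, (b i j * polar Q (f i) w) • ι Q (f j) := by
      simp only [lie_ι_mul_ι, smul_sub, smul_smul, Finset.sum_sub_distrib]
    _ = _ := by
      rw [swap, sub_neg_eq_add, map_sum, ← Finset.sum_add_distrib]
      refine Finset.sum_congr rfl fun i _ => ?_
      rw [← Finset.sum_smul, ← add_smul, ← two_mul, map_smul]

theorem ι_injective_of_invertible_two [Invertible (2 : R)] : Function.Injective (ι Q) := by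
  intro u v h
  have h' := congrArg (equivExterior Q) h
  simpa only [equivExterior, changeFormEquiv_apply, changeForm_ι, ExteriorAlgebra.ι_inj] using h'

theorem sub_reverse_mul_self_eq_algebraMap {x : CliffordAlgebra Q} {r s : R}
    (hr : x + CliffordAlgebra.reverse x = algebraMap R _ r)
    (hs : x * CliffordAlgebra.reverse x = algebraMap R _ s) :
    (x - CliffordAlgebra.reverse x) * (x - CliffordAlgebra.reverse x) =
      algebraMap R _ (r * r - 4 * s) := by
  have hcomm : CliffordAlgebra.reverse x * x = algebraMap R _ s := by
    rw [eq_sub_of_add_eq' hr, sub_mul, Algebra.commutes, ← mul_sub, ← eq_sub_of_add_eq' hr, hs]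
  calc
    _ = (x + CliffordAlgebra.reverse x) * (x + CliffordAlgebra.reverse x) -
        2 * (x * CliffordAlgebra.reverse x) - 2 * (CliffordAlgebra.reverse x * x) := by
      noncomm_ring
    _ = _ := by
      rw [hr, hs, hcomm, map_sub, map_mul, map_mul, map_ofNat]
      noncomm_ring

end Bivectors

section EvenElements

variable {R A J : Type*} [CommRing R] [Ring A] [Algebra R A] {f : J → A}

/-- The span of the products of `k` (mod `2`) distinct members of the family `f`, in any order. For
an anticommuting family with scalar squares the order matters only up to sign. -/
def nodupProdSpan (R : Type*) [CommRing R] [Algebra R A] (f : J → A) (k : ZMod 2) :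
    Submodule R A :=
  Submodule.span R {w | ∃ l : List J, l.Nodup ∧ (l.length : ZMod 2) = k ∧ (l.map f).prod = w}

theorem exists_mul_prod_eq_smul_prod {q : J → R} (hsq : ∀ i, f i * f i = algebraMap R A (q i))
    (hanti : Pairwise fun i j => f i * f j = -(f j * f i)) (i : J) {l : List J} (hl : l.Nodup) :
    ∃ (c : R) (l' : List J), l'.Nodup ∧ l' ⊆ i :: l ∧ (l'.length : ZMod 2) = l.length + 1 ∧
      f i * (l.map f).prod = c • (l'.map f).prod := by
  induction l with
  | nil => exact ⟨1, [i], by simp⟩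
  | cons j l ih =>
    obtain ⟨hj, hl'⟩ := List.nodup_cons.mp hl
    rcases eq_or_ne i j with rfl | hij
    · refine ⟨q i, l, hl', by grind, ?_, ?_⟩
      · rw [List.length_cons, Nat.cast_succ, add_assoc, CharTwo.add_self_eq_zero, add_zero]
      · rw [List.map_cons, List.prod_cons, ← mul_assoc, hsq, Algebra.smul_def]
    · obtain ⟨c, l', hnodup, hsub, hlen, h⟩ := ih hl'
      refine ⟨-c, j :: l', List.nodup_cons.mpr ⟨fun hj' => ?_, hnodup⟩, by grind, ?_, ?_⟩
      · exact (List.mem_cons.mp (hsub hj')).elim hij.symm hj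
      · rw [List.length_cons, List.length_cons, Nat.cast_succ, Nat.cast_succ, hlen]
      · rw [List.map_cons, List.map_cons, List.prod_cons, List.prod_cons, ← mul_assoc, hanti hij,
          neg_mul, mul_assoc, h, mul_smul_comm, neg_smul]

theorem mul_mem_nodupProdSpan {q : J → R} (hsq : ∀ i, f i * f i = algebraMap R A (q i))
    (hanti : Pairwise fun i j => f i * f j = -(f j * f i)) (i : J) {k : ZMod 2} {w : A}
    (hw : w ∈ nodupProdSpan R f k) : f i * w ∈ nodupProdSpan R f (k + 1) := by
  induction hw using Submodule.span_induction with
  | mem w hw =>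
    obtain ⟨l, hl, rfl, rfl⟩ := hw
    obtain ⟨c, l', hl', -, hlen, h⟩ := exists_mul_prod_eq_smul_prod hsq hanti i hl
    exact h ▸ Submodule.smul_mem _ c (Submodule.subset_span ⟨l', hl', hlen, rfl⟩)
  | zero => simp only [mul_zero, zero_mem]
  | add v w _ _ hv hw => simpa only [mul_add] using add_mem hv hw
  | smul r w _ hw => simpa only [mul_smul_comm] using Submodule.smul_mem _ r hw

theorem prod_mul_of_anticomm (hanti : Pairwise fun i j => f i * f j = -(f j * f i)) {i : J}
    {l : List J} (hi : i ∉ l) :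
    (l.map f).prod * f i = (-1) ^ l.length * (f i * (l.map f).prod) := by
  induction l with
  | nil => simp
  | cons j l ih =>
    obtain ⟨hij, hi⟩ := not_or.mp (mt List.mem_cons.mpr hi)
    have hij' : f j * f i = -(f i * f j) := hanti (Ne.symm hij)
    rw [List.map_cons, List.prod_cons, mul_assoc, ih hi, List.length_cons, pow_succ,
      ((Commute.neg_one_right (f j)).pow_right _).left_comm, ← mul_assoc (f j), hij']
    noncomm_ring

theorem prod_reverse_of_anticomm (hanti : Pairwise fun i j => f i * f j = -(f j * f i))
    {l : List J} (hl : l.Nodup) :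
    (l.map f).reverse.prod = (-1) ^ l.length.choose 2 * (l.map f).prod := by
  induction l with
  | nil => simp
  | cons j l ih =>
    obtain ⟨hj, hl⟩ := List.nodup_cons.mp hl
    rw [List.map_cons, List.reverse_cons, List.prod_append, List.prod_singleton, ih hl, mul_assoc,
      prod_mul_of_anticomm hanti hj, List.prod_cons, List.length_cons, Nat.choose_succ_succ' _ 1,
      Nat.choose_one_right, ← mul_assoc, ← pow_add, add_comm]

variable {M : Type*} [AddCommGroup M] [Module R M] {Q : QuadraticForm R M}

theorem mem_nodupProdSpan_of_mem_even [Finite J] (e : Module.Basis J R M)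
    (he : Pairwise fun i j => Q.IsOrtho (e i) (e j)) {x : CliffordAlgebra Q} (hx : x ∈ even Q) :
    x ∈ nodupProdSpan R (fun i => ι Q (e i)) 0 := by
  cases nonempty_fintype J
  have ι_mul_mem (v : M) {k : ZMod 2} {w : CliffordAlgebra Q}
      (hw : w ∈ nodupProdSpan R (fun i => ι Q (e i)) k) :
      ι Q v * w ∈ nodupProdSpan R (fun i => ι Q (e i)) (k + 1) := by
    rw [ι_eq_sum_repr e v, Finset.sum_mul]
    refine Submodule.sum_mem _ fun i _ => ?_
    rw [smul_mul_assoc]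
    exact Submodule.smul_mem _ _ (mul_mem_nodupProdSpan (fun j => ι_sq_scalar Q (e j))
      (fun i j hij => ι_mul_ι_comm_of_isOrtho (he hij)) i hw)
  induction x, hx using even_induction with
  | algebraMap r =>
    rw [Algebra.algebraMap_eq_smul_one]
    exact Submodule.smul_mem _ r
      (Submodule.subset_span ⟨[], List.nodup_nil, Nat.cast_zero, List.prod_nil⟩)
  | add x y _ _ hx hy => exact add_mem hx hy
  | ι_mul_ι_mul u v x _ hx =>
    have h := ι_mul_mem u (ι_mul_mem v hx)
    rwa [add_assoc, CharTwo.add_self_eq_zero, add_zero, ← mul_assoc] at h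

theorem sub_reverse_mem_bivectors_of_mem_even [Fintype J] (hJ : Fintype.card J ≤ 5)
    (e : Module.Basis J R M) (he : Pairwise fun i j => Q.IsOrtho (e i) (e j))
    {x : CliffordAlgebra Q} (hx : x ∈ even Q) : x - CliffordAlgebra.reverse x ∈ bivectors Q := by
  have hmem := mem_nodupProdSpan_of_mem_even e he hx
  clear hx
  induction hmem using Submodule.span_induction with
  | mem x hx =>
    obtain ⟨l, hl, hlen, rfl⟩ := hx
    have hrev : CliffordAlgebra.reverse (l.map fun i => ι Q (e i)).prod =
        (-1) ^ l.length.choose 2 * (l.map fun i => ι Q (e i)).prod := by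
      have h := reverse_prod_map_ι (Q := Q) (l.map e)
      rw [List.map_map] at h
      exact h.trans (prod_reverse_of_anticomm
        (fun i j hij => ι_mul_ι_comm_of_isOrtho (he hij)) hl)
    have hcases : l.length = 2 ∨ Even (l.length.choose 2) := by
      have hle : l.length ≤ 5 := hl.length_le_card.trans hJ
      rw [ZMod.natCast_eq_zero_iff_even] at hlen
      interval_cases l.length <;> revert hlen <;> decide
    rcases hcases with h2 | heven
    · obtain ⟨i, j, rfl⟩ := List.length_eq_two.mp h2
      refine Submodule.subset_span ⟨e i, e j, ?_⟩
      simp [Ring.lie_def]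
    · rw [hrev, heven.neg_one_pow, one_mul, sub_self]
      exact zero_mem _
  | zero => simp only [map_zero, sub_zero, zero_mem]
  | add x y _ _ hx hy => simpa only [map_add, add_sub_add_comm] using add_mem hx hy
  | smul r x _ hx => simpa only [map_smul, smul_sub] using Submodule.smul_mem _ r hx

end EvenElements

section NullVectors

variable {K M : Type*} [Field K] [AddCommGroup M] [Module K M] {Q : QuadraticForm K M}

theorem exists_ι_eq_smul_of_mul_eq_zero {u n : M} (hn : ∃ v, polar Q n v ≠ 0)
    (h : ι Q u * ι Q n = 0) : ∃ c : K, ι Q u = c • ι Q n := by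
  obtain ⟨v, hv⟩ := hn
  have key : polar Q n v • ι Q u = polar Q u v • ι Q n := by
    have hlie := lie_ι_mul_ι (Q := Q) u n v
    rwa [Ring.lie_def, h, zero_mul, mul_zero, sub_zero, eq_comm, sub_eq_zero] at hlie
  exact ⟨(polar Q n v)⁻¹ * polar Q u v, by rw [mul_smul, ← key, inv_smul_smul₀ hv]⟩

theorem mul_null_eq_zero_of_add_eq_zero {u e w n : M} (he : Q e ≠ 0) (hn : Q n = 0)
    (h : ι Q u * ι Q n + ι Q e * ι Q w = 0) : ι Q w * ι Q n = 0 := by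
  have h0 : Q e • (ι Q w * ι Q n) = 0 := calc
    Q e • (ι Q w * ι Q n) = ι Q e * (ι Q e * ι Q w) * ι Q n := by
      rw [Algebra.smul_def, ← ι_sq_scalar]; noncomm_ring
    _ = -(ι Q e * ι Q u * (ι Q n * ι Q n)) := by
      rw [eq_neg_of_add_eq_zero_right h]; noncomm_ring
    _ = 0 := by rw [ι_sq_scalar, hn, map_zero, mul_zero, neg_zero]
  exact (smul_eq_zero.mp h0).resolve_left he

theorem eq_zero_of_smul_sub_smul_anticomm [Invertible (2 : K)] {e n : M} (he : Q e ≠ 0)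
    (hen : Q.IsOrtho e n) {c d : K}
    (h : (c • ι Q n - d • ι Q e) * ι Q e + ι Q e * (c • ι Q n - d • ι Q e) = 0) : d = 0 := by
  have h0 : algebraMap K (CliffordAlgebra Q) (2 * d * Q e) = 0 := calc
    algebraMap K (CliffordAlgebra Q) (2 * d * Q e) = (2 * d) • (ι Q e * ι Q e) := by
      rw [ι_sq_scalar, map_mul, Algebra.smul_def]
    _ = -((c • ι Q n - d • ι Q e) * ι Q e + ι Q e * (c • ι Q n - d • ι Q e)) := by
      simp only [sub_mul, mul_sub, smul_mul_assoc, mul_smul_comm,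
        ι_mul_ι_comm_of_isOrtho hen.symm]
      module
    _ = 0 := by rw [h, neg_zero]
  rw [FaithfulSMul.algebraMap_eq_zero_iff] at h0
  simpa [(isUnit_of_invertible (2 : K)).ne_zero, he] using h0

theorem lie_eq_zero_and_exists_lie_eq_smul_of_commute [Invertible (2 : K)]
    {B : CliffordAlgebra Q} (hB : B ∈ bivectors Q) {e n : M} (he : Q e ≠ 0) (hn : Q n = 0)
    (hn' : ∃ v, polar Q n v ≠ 0) (hen : Q.IsOrtho e n) (h : Commute B (ι Q e * ι Q n)) :
    ⁅B, ι Q n⁆ = 0 ∧ ∃ c : K, ⁅B, ι Q e⁆ = c • ι Q n := by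
  obtain ⟨u, hu⟩ := lie_ι_mem_range_of_mem_bivectors hB e
  obtain ⟨w, hw⟩ := lie_ι_mem_range_of_mem_bivectors hB n
  have leibniz : ι Q u * ι Q n + ι Q e * ι Q w = 0 := calc
    ι Q u * ι Q n + ι Q e * ι Q w = B * (ι Q e * ι Q n) - ι Q e * ι Q n * B := by
      rw [hu, hw, Ring.lie_def, Ring.lie_def]; noncomm_ring
    _ = 0 := sub_eq_zero.mpr h.eq
  obtain ⟨d, hd⟩ := exists_ι_eq_smul_of_mul_eq_zero hn'
    (mul_null_eq_zero_of_add_eq_zero he hn leibniz)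
  have un : ι Q (u + d • e) * ι Q n = 0 := by
    rw [map_add, map_smul, add_mul, smul_mul_assoc, ← mul_smul_comm, ← hd, leibniz]
  obtain ⟨c, hc⟩ := exists_ι_eq_smul_of_mul_eq_zero hn' un
  rw [map_add, map_smul, ← eq_sub_iff_add_eq] at hc
  obtain rfl : d = 0 := eq_zero_of_smul_sub_smul_anticomm he hen
    (hc ▸ hu ▸ lie_ι_mul_add_mul_lie_ι B e)
  exact ⟨by rw [← hw, hd, zero_smul], c, by rw [← hu, hc, zero_smul, sub_zero]⟩

theorem eq_zero_or_mul_eq_zero_of_commute_mul_self {A : Type*} [Ring A] [Algebra K A]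
    [Invertible (2 : K)] {B e n : A} {c : K} (hn : Commute B n) (he : ⁅B, e⁆ = c • n)
    (hsq : Commute (B * B) e) : c = 0 ∨ B * n = 0 := by
  have key : (2 * c) • (B * n) = 0 := calc
    (2 * c) • (B * n) = B * (c • n) + c • n * B := by
      rw [smul_mul_assoc, ← hn.eq, mul_smul_comm]; module
    _ = B * B * e - e * (B * B) := by rw [← he, Ring.lie_def]; noncomm_ring
    _ = 0 := sub_eq_zero.mpr hsq.eq
  simpa [(isUnit_of_invertible (2 : K)).ne_zero] using key

end NullVectors

section ConformalGeometricAlgebra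

theorem Qcga_apply (v : Fin 5 → ℝ) :
    Qcga v = v 0 * v 0 + v 1 * v 1 + v 2 * v 2 + v 3 * v 3 - v 4 * v 4 := by
  rw [sub_eq_add_neg]
  simp [Qcga, weightedSumSquares_apply, Fin.sum_univ_five]

theorem polar_Qcga (u v : Fin 5 → ℝ) : polar Qcga u v =
    2 * (u 0 * v 0 + u 1 * v 1 + u 2 * v 2 + u 3 * v 3 - u 4 * v 4) := by
  simp only [polar, Qcga_apply, Pi.add_apply]
  ring

theorem isOrtho_Qcga_iff {u v : Fin 5 → ℝ} : Qcga.IsOrtho u v ↔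
    u 0 * v 0 + u 1 * v 1 + u 2 * v 2 + u 3 * v 3 - u 4 * v 4 = 0 := by
  rw [← isOrtho_polarBilin, polarBilin_apply_apply, polar_Qcga]
  simp

theorem pairwise_isOrtho_basisFun :
    Pairwise fun i j => Qcga.IsOrtho (Pi.basisFun ℝ (Fin 5) i) (Pi.basisFun ℝ (Fin 5) j) := by
  intro i j hij
  rw [isOrtho_Qcga_iff]
  fin_cases i <;> fin_cases j <;> simp at hij ⊢

/-- The null vector `n = e₊ + e₋`, the point at infinity of the conformal model. It turns
`eᵢ₊ + eᵢ₋` into the product `eᵢ n`. -/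
def nullVec : Fin 5 → ℝ := Pi.single 3 1 + Pi.single 4 1

theorem eCGA_mul_ι_nullVec (i : Fin 5) :
    eCGA i * ι Qcga nullVec = eCGA i * eCGA 3 + eCGA i * eCGA 4 := by
  rw [nullVec, map_add, mul_add, eCGA, eCGA, eCGA]

theorem Qcga_nullVec : Qcga nullVec = 0 := by
  simp [Qcga_apply, nullVec]

theorem isOrtho_single_nullVec {i : Fin 5} (hi : i < 3) :
    Qcga.IsOrtho (Pi.single i 1) nullVec := by
  rw [isOrtho_Qcga_iff]
  fin_cases i <;> simp [nullVec] at hi ⊢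

theorem nullVec_mul_eCGA {i : Fin 5} (hi : i < 3) :
    ι Qcga nullVec * eCGA i = -(eCGA i * ι Qcga nullVec) :=
  ι_mul_ι_comm_of_isOrtho (isOrtho_single_nullVec hi).symm

theorem eCGA_mul_self {i : Fin 5} (hi : i ≠ 4) : eCGA i * eCGA i = 1 := by
  rw [eCGA, ι_sq_scalar, Qcga_apply]
  fin_cases i <;> simp at hi ⊢

theorem eCGA_mul_eCGA_comm {i j : Fin 5} (h : i ≠ j) : eCGA i * eCGA j = -(eCGA j * eCGA i) := by
  simpa only [Pi.basisFun_apply, eCGA] using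
    ι_mul_ι_comm_of_isOrtho (pairwise_isOrtho_basisFun h)

theorem exists_eq_of_lie_nullVec {B : CGA} (hB : B ∈ bivectors Qcga) {c : ℝ}
    (hn : ⁅B, ι Qcga nullVec⁆ = 0) (he : ⁅B, eCGA 2⁆ = c • ι Qcga nullVec) :
    ∃ α β γ : ℝ, B = α • (eCGA 0 * eCGA 1) + β • (eCGA 0 * ι Qcga nullVec) +
      γ • (eCGA 1 * ι Qcga nullVec) - (c / 2) • (eCGA 2 * ι Qcga nullVec) := by
  obtain ⟨b, hb, rfl⟩ := exists_skew_of_mem_bivectors (Pi.basisFun ℝ (Fin 5)) hB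
  rw [lie_sum_ι_mul_ι_of_skew _ hb, ← map_zero (ι Qcga)] at hn
  rw [eCGA, lie_sum_ι_mul_ι_of_skew _ hb, ← map_smul] at he
  have skew (i j : Fin 5) : b j i = -b i j := congrFun (congrFun hb i) j
  have diag (i : Fin 5) : b i i = 0 := self_eq_neg.mp (skew i i)
  have hn' (i : Fin 5) : b i 3 = b i 4 := by
    have h : b i 3 * 2 + -(b i 4 * 2) = 0 := by
      simpa [polar_Qcga, nullVec, Fin.sum_univ_five, Pi.single_apply] using
        congrFun (ι_injective_of_invertible_two hn) i
    linarith
  have he' (i : Fin 5) : 4 * b i 2 = c * nullVec i := by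
    have h : 2 * (b i 2 * 2) = c * nullVec i := by
      simpa [polar_Qcga, Pi.single_apply] using congrFun (ι_injective_of_invertible_two he) i
    linarith
  have b02 : b 0 2 = 0 := by simpa [nullVec] using he' 0
  have b12 : b 1 2 = 0 := by simpa [nullVec] using he' 1
  have b24 : b 2 4 = -(c / 4) := by
    have h : 4 * b 4 2 = c := by simpa [nullVec] using he' 4
    linarith [skew 2 4]
  have b34 : b 3 4 = 0 := by rw [← hn', diag]
  refine ⟨2 * b 0 1, 2 * b 0 4, 2 * b 1 4, ?_⟩
  calc
    _ = b 0 1 • (eCGA 0 * eCGA 1 - eCGA 1 * eCGA 0) +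
        b 0 4 • (eCGA 0 * ι Qcga nullVec - ι Qcga nullVec * eCGA 0) +
        b 1 4 • (eCGA 1 * ι Qcga nullVec - ι Qcga nullVec * eCGA 1) -
        (c / 4) • (eCGA 2 * ι Qcga nullVec - ι Qcga nullVec * eCGA 2) := by
      simp only [Fin.sum_univ_five, Pi.basisFun_apply, diag, skew 0 1, skew 0 2, skew 0 3,
        skew 0 4, skew 1 2, skew 1 3, skew 1 4, skew 2 3, skew 2 4, hn', b02, b12, b24,
        b34, nullVec, map_add, mul_add, add_mul, eCGA]
      module
    _ = _ := by
      rw [eCGA_mul_eCGA_comm one_ne_zero, nullVec_mul_eCGA (by decide),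
        nullVec_mul_eCGA (by decide), nullVec_mul_eCGA (by decide)]
      module

theorem eCGA_zero_mul_eCGA_one_mul_nullVec_ne_zero : eCGA 0 * eCGA 1 * ι Qcga nullVec ≠ 0 := by
  intro h
  have hn : ι Qcga nullVec = 0 := calc
    ι Qcga nullVec = eCGA 1 * (eCGA 0 * eCGA 0) * eCGA 1 * ι Qcga nullVec := by
      rw [eCGA_mul_self (by decide), mul_one, eCGA_mul_self (by decide), one_mul]
    _ = eCGA 1 * eCGA 0 * (eCGA 0 * eCGA 1 * ι Qcga nullVec) := by noncomm_ring
    _ = 0 := by rw [h, mul_zero]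
  have h3 := congrFun (ι_injective_of_invertible_two (hn.trans (map_zero _).symm)) 3
  simp [nullVec] at h3

theorem exists_eq_of_commute_of_mul_self_eq {B : CGA} (hB : B ∈ bivectors Qcga)
    (hcomm : Commute B (eCGA 2 * ι Qcga nullVec)) {r : ℝ} (hsq : B * B = algebraMap ℝ CGA r) :
    ∃ α β γ δ : ℝ, α * δ = 0 ∧ B = α • (eCGA 0 * eCGA 1) + β • (eCGA 0 * ι Qcga nullVec) +
      γ • (eCGA 1 * ι Qcga nullVec) + δ • (eCGA 2 * ι Qcga nullVec) := by
  have hn' : ∃ v, polar Qcga nullVec v ≠ 0 :=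
    ⟨Pi.single 3 1, by rw [polar_Qcga]; simp [nullVec]⟩
  obtain ⟨hn, c, hc⟩ := lie_eq_zero_and_exists_lie_eq_smul_of_commute hB (by simp [Qcga_apply])
    Qcga_nullVec hn' (isOrtho_single_nullVec (by decide)) hcomm
  obtain ⟨α, β, γ, hB_eq⟩ := exists_eq_of_lie_nullVec hB hn hc
  refine ⟨α, β, γ, -(c / 2), ?_, by rw [hB_eq, neg_smul, sub_eq_add_neg]⟩
  have hsq' : Commute (B * B) (eCGA 2) := hsq ▸ Algebra.commutes r _
  rcases eq_zero_or_mul_eq_zero_of_commute_mul_self (sub_eq_zero.mp hn) hc hsq' with rfl | hBn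
  · simp
  · have nn : ι Qcga nullVec * ι Qcga nullVec = 0 := by rw [ι_sq_scalar, Qcga_nullVec, map_zero]
    have hα : α • (eCGA 0 * eCGA 1 * ι Qcga nullVec) = 0 := by
      simpa [hB_eq, add_mul, sub_mul, mul_assoc, nn] using hBn
    rw [(smul_eq_zero.mp hα).resolve_right eCGA_zero_mul_eCGA_one_mul_nullVec_ne_zero, zero_mul]

end ConformalGeometricAlgebra

/-- if `x ∈ CGA₊` satisfies `x + x̃ ∈ ℝ`, `x·x̃ ∈ ℝ` and `x` commutes
with `e₃₊ + e₃₋`, then `x` lies in the real span of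
`{1, e₁₊+e₁₋, e₂₊+e₂₋, e₃₊+e₃₋}` or in the real span of `{1, e₁₂, e₁₊+e₁₋, e₂₊+e₂₋}`. -/
theorem stmt10 (x : CGA) (hx : x ∈ CliffordAlgebra.even Qcga)
    (h1 : ∃ r : ℝ, x + CliffordAlgebra.reverse x = algebraMap ℝ CGA r)
    (h2 : ∃ r : ℝ, x * CliffordAlgebra.reverse x = algebraMap ℝ CGA r)
    (hcomm : x * (eCGA 2 * eCGA 3 + eCGA 2 * eCGA 4)
      = (eCGA 2 * eCGA 3 + eCGA 2 * eCGA 4) * x) :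
    x ∈ Submodule.span ℝ
        ({1, eCGA 0 * eCGA 3 + eCGA 0 * eCGA 4, eCGA 1 * eCGA 3 + eCGA 1 * eCGA 4,
          eCGA 2 * eCGA 3 + eCGA 2 * eCGA 4} : Set CGA) ∨
    x ∈ Submodule.span ℝ
        ({1, eCGA 0 * eCGA 1, eCGA 0 * eCGA 3 + eCGA 0 * eCGA 4,
          eCGA 1 * eCGA 3 + eCGA 1 * eCGA 4} : Set CGA) := by
  obtain ⟨r, hr⟩ := h1
  obtain ⟨s, hs⟩ := h2
  set B := x - CliffordAlgebra.reverse x with hB_def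
  have hB : B ∈ bivectors Qcga := sub_reverse_mem_bivectors_of_mem_even (by simp)
    (Pi.basisFun ℝ (Fin 5)) pairwise_isOrtho_basisFun hx
  have hBx : B = x + x - algebraMap ℝ CGA r := by rw [hB_def, ← hr]; abel
  have hBcomm : Commute B (eCGA 2 * ι Qcga nullVec) := by
    rw [← eCGA_mul_ι_nullVec] at hcomm
    rw [hBx]
    exact (Commute.add_left hcomm hcomm).sub_left (Algebra.commutes r _)
  obtain ⟨α, β, γ, δ, hαδ, hB_eq⟩ :=
    exists_eq_of_commute_of_mul_self_eq hB hBcomm (sub_reverse_mul_self_eq_algebraMap hr hs)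
  have hx_eq : x = (r / 2) • 1 + (1 / 2 : ℝ) • B := by
    rw [hBx, Algebra.algebraMap_eq_smul_one]
    module
  simp only [← eCGA_mul_ι_nullVec]
  rw [hx_eq, hB_eq]
  rcases mul_eq_zero.mp hαδ with rfl | rfl
  · exact .inl (Submodule.mem_span_insert.mpr
      ⟨r / 2, _, Submodule.mem_span_triple.mpr ⟨β / 2, γ / 2, δ / 2, rfl⟩, by module⟩)
  · exact .inr (Submodule.mem_span_insert.mpr
      ⟨r / 2, _, Submodule.mem_span_triple.mpr ⟨α / 2, β / 2, γ / 2, rfl⟩, by module⟩)
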